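/- arXiv:2011.14609 — 3 statements merged into one kernel-verified Lean document; each statement's English description precedes it below -/
import Mathlib

section
/- Let m and n be positive integers with n ≥ 4 even, let 0 ≤ ℓ ≤ n−1 be an integer of the same parity as m, and let G = ⟨t, x, y | t² = 1, x^{n/2} = 1, y^m = x^{(ℓ+m)/2}, txt = x⁻¹, tyt = y⁻¹, xy = yx⟩. Then there exists an automorphism of G of order 3 fixing the set {t, tx, ty} setwise if and only if gcd(n, ℓ+m) = gcd(n, ℓ−m) = 2m and 2mn divides ℓ² + 3m². -/
namespace HTGPaper

/-- The honeycomb toroidal graph `HTG(m,n,ℓ)`. -/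
def HTG (m n ℓ : ℕ) : SimpleGraph (ZMod m × ZMod n) :=
  SimpleGraph.fromRel (fun v w =>
    (v.1 = w.1 ∧ (w.2 = v.2 + 1 ∨ w.2 = v.2 - 1)) ∨
    (v.1.val ≠ m - 1 ∧ w.1 = v.1 + 1 ∧ w.2 = v.2 ∧ v.1.val % 2 ≠ v.2.val % 2) ∨
    (v.1.val = m - 1 ∧ w.1 = 0 ∧ w.2 = v.2 + (ℓ : ZMod n) ∧ v.2.val % 2 = m % 2))

/-- Generators of the generalized dihedral group `G`. -/
inductive Gen | t | x | y

/-- Relators of the presentation of `G`. -/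
def rels (m n ℓ : ℕ) : Set (FreeGroup Gen) :=
  {FreeGroup.of Gen.t ^ 2,
   FreeGroup.of Gen.x ^ (n / 2),
   FreeGroup.of Gen.y ^ m * (FreeGroup.of Gen.x ^ ((ℓ + m) / 2))⁻¹,
   FreeGroup.of Gen.t * FreeGroup.of Gen.x * (FreeGroup.of Gen.t)⁻¹ * FreeGroup.of Gen.x,
   FreeGroup.of Gen.t * FreeGroup.of Gen.y * (FreeGroup.of Gen.t)⁻¹ * FreeGroup.of Gen.y,
   FreeGroup.of Gen.x * FreeGroup.of Gen.y * (FreeGroup.of Gen.x)⁻¹ * (FreeGroup.of Gen.y)⁻¹}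

/-- The group `G = ⟨t,x,y | t², x^{n/2}, y^m x^{-(ℓ+m)/2}, txt⁻¹x, tyt⁻¹y, [x,y]⟩`. -/
abbrev G (m n ℓ : ℕ) : Type := PresentedGroup (rels m n ℓ)

def gent (m n ℓ : ℕ) : G m n ℓ := PresentedGroup.of Gen.t
def genx (m n ℓ : ℕ) : G m n ℓ := PresentedGroup.of Gen.x
def geny (m n ℓ : ℕ) : G m n ℓ := PresentedGroup.of Gen.y

/-- The connection set `{t, tx, ty}`. -/
def S (m n ℓ : ℕ) : Set (G m n ℓ) :=
  {gent m n ℓ, gent m n ℓ * genx m n ℓ, gent m n ℓ * geny m n ℓ}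

/-- The Cayley graph of a group with respect to a subset. -/
def cayley (H : Type*) [Group H] (T : Set H) : SimpleGraph H :=
  SimpleGraph.fromRel (fun g h => ∃ s ∈ T, h = g * s)

/-- The Cayley graph of an additive group with respect to a subset. -/
def addCayley (H : Type*) [AddGroup H] (T : Set H) : SimpleGraph H :=
  SimpleGraph.fromRel (fun g h => ∃ s ∈ T, h = g + s)

/-- `Cay(H;T)` is a normal Cayley graph of `H` if the left regular representation `H_L`
is a normal subgroup of the automorphism group, i.e. every conjugate of a left
translation by a graph automorphism is again a left translation. -/
def IsNormalCayley (H : Type*) [Group H] (T : Set H) : Prop :=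
  ∀ (f : cayley H T ≃g cayley H T) (a : H), ∃ b : H,
    ∀ g : H, f (a * f.symm g) = b * g

/-- An `s`-arc of a graph: `s+1` vertices, consecutive ones adjacent, and any three
consecutive vertices pairwise distinct. -/
def IsSArc {V : Type*} (Γ : SimpleGraph V) (s : ℕ) (p : Fin (s + 1) → V) : Prop :=
  (∀ i : Fin s, Γ.Adj (p i.castSucc) (p i.succ)) ∧
  ∀ i j : Fin (s + 1), (i : ℕ) + 2 = (j : ℕ) → p i ≠ p j

/-- A graph is `s`-arc-transitive if its automorphism group is transitive on `s`-arcs. -/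
def IsSArcTransitive {V : Type*} (Γ : SimpleGraph V) (s : ℕ) : Prop :=
  ∀ p q : Fin (s + 1) → V, IsSArc Γ s p → IsSArc Γ s q →
    ∃ f : Γ ≃g Γ, ∀ i, f (p i) = q i

/-- A graph is `s`-arc-regular if its automorphism group is regular on `s`-arcs. -/
def IsSArcRegular {V : Type*} (Γ : SimpleGraph V) (s : ℕ) : Prop :=
  ∀ p q : Fin (s + 1) → V, IsSArc Γ s p → IsSArc Γ s q →
    ∃! f : Γ ≃g Γ, ∀ i, f (p i) = q i

/-- A graph is arc-transitive if it is `1`-arc-transitive. -/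
def IsArcTransitive {V : Type*} (Γ : SimpleGraph V) : Prop :=
  IsSArcTransitive Γ 1

/-- The generalized prism `GPr(k)`. -/
def GPr (k : ℕ) : SimpleGraph (ZMod 2 × ZMod (2 * k)) :=
  SimpleGraph.fromRel (fun v w =>
    (v.1 = w.1 ∧ (w.2 = v.2 + 1 ∨ w.2 = v.2 - 1)) ∨
    (Even v.2.val ∧ w.1 = v.1 + 1 ∧ w.2 = v.2 + 1))

/-- The cubic graph on `k` vertices given by LCF-type data `f`. -/
def lcfGraph (k : ℕ) (f : ℕ → ℤ) : SimpleGraph (ZMod k) :=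
  SimpleGraph.fromRel (fun v w => w = v + 1 ∨ w = v + (f v.val : ZMod k))

/-- The cube graph `Q₃`, LCF notation `[3,-3]⁴`. -/
def cubeGraph : SimpleGraph (ZMod 8) :=
  lcfGraph 8 (fun i => if i % 2 = 0 then 3 else -3)

/-- The Heawood graph, LCF notation `[5,-5]⁷`. -/
def heawood : SimpleGraph (ZMod 14) :=
  lcfGraph 14 (fun i => if i % 2 = 0 then 5 else -5)

/-- The Möbius–Kantor graph, LCF notation `[5,-5]⁸`. -/
def mobiusKantor : SimpleGraph (ZMod 16) :=
  lcfGraph 16 (fun i => if i % 2 = 0 then 5 else -5)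

/-- The Pappus graph, LCF notation `[5,7,-7,7,-7,-5]³`. -/
def pappus : SimpleGraph (ZMod 18) :=
  lcfGraph 18 (fun i =>
    match i % 6 with
    | 0 => 5 | 1 => 7 | 2 => -7 | 3 => 7 | 4 => -7 | _ => -5)

/-- The red edges of `HTG(m,n,ℓ) = Cay(G;{t,tx,ty})`. -/
def Red (m n ℓ : ℕ) : Set (Sym2 (G m n ℓ)) :=
  {e | ∃ g : G m n ℓ, e = s(g, g * gent m n ℓ)}

/-- The blue edges. -/
def Blue (m n ℓ : ℕ) : Set (Sym2 (G m n ℓ)) :=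
  {e | ∃ g : G m n ℓ, e = s(g, g * (gent m n ℓ * genx m n ℓ))}

/-- The green edges. -/
def Green (m n ℓ : ℕ) : Set (Sym2 (G m n ℓ)) :=
  {e | ∃ g : G m n ℓ, e = s(g, g * (gent m n ℓ * geny m n ℓ))}

/-- The three color classes. -/
def colorClasses (m n ℓ : ℕ) : Set (Set (Sym2 (G m n ℓ))) :=
  {Red m n ℓ, Blue m n ℓ, Green m n ℓ}

/-- An automorphism of `Cay(G;{t,tx,ty})` is color permuting if it preserves the
partition of the edges into the three color classes. -/
def IsColorPermuting {m n ℓ : ℕ}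
    (f : cayley (G m n ℓ) (S m n ℓ) ≃g cayley (G m n ℓ) (S m n ℓ)) : Prop :=
  ∀ C ∈ colorClasses m n ℓ, Sym2.map ⇑f '' C ∈ colorClasses m n ℓ

/-- The group `Aut(H;T)` of automorphisms of `H` fixing `T` setwise. -/
def autFixing (H : Type*) [Group H] (T : Set H) : Subgroup (MulAut H) where
  carrier := {φ | ⇑φ '' T = T}
  one_mem' := by
    show ⇑(1 : MulAut H) '' T = T
    simp
  mul_mem' := by
    intro a b ha hb
    show ⇑(a * b) '' T = T
    have h : ⇑(a * b) = ⇑a ∘ ⇑b := rfl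
    rw [h, Set.image_comp]
    rw [show ⇑b '' T = T from hb, show ⇑a '' T = T from ha]
  inv_mem' := by
    intro a ha
    show ⇑a⁻¹ '' T = T
    conv_lhs => rw [← show ⇑a '' T = T from ha]
    rw [← Set.image_comp]
    have h : ⇑a⁻¹ ∘ ⇑a = id := by
      funext g
      simp
    rw [h, Set.image_id]

/-! Elements of the abelian part of `G` are monomials `x ^ a * y ^ b`, and such a monomial is
trivial exactly when `(a, b)` lies in the lattice spanned by `(n / 2, 0)` and `(-(ℓ + m) / 2, m)`.
An automorphism of order three preserving `{t, tx, ty}` cyclically permutes it, so up to inversion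
it sends `x ↦ x⁻¹ y` and `y ↦ x⁻¹`. On exponents this is multiplication by a primitive cube root
of unity on the Eisenstein integers, and the automorphism exists exactly when the lattice is
invariant under it, i.e. is an ideal. Testing invariance on the two basis vectors gives the
arithmetic condition. -/

lemma fixes_or_cycles_of_mapsTo {α : Type*} {f : α → α} (h3 : ∀ z, f (f (f z)) = z) {a b c : α}
    (hf : Set.MapsTo f {a, b, c} {a, b, c}) :
    (f a = a ∧ f b = b ∧ f c = c) ∨ (f a = b ∧ f b = c ∧ f c = a) ∨
      (f a = c ∧ f c = b ∧ f b = a) := by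
  have ha : f a = a ∨ f a = b ∨ f a = c := hf (by simp)
  have hb : f b = a ∨ f b = b ∨ f b = c := hf (by simp)
  have hc : f c = a ∨ f c = b ∨ f c = c := hf (by simp)
  -- Applying `h3` at `a`, `b` and `c` excludes transpositions and non-injective maps.
  grind

lemma dvd_and_dvd_iff_gcd_eq {m N k : ℤ} (h : m * N ∣ k ^ 2 - m * k + m ^ 2) :
    m ∣ N ∧ m ∣ k ↔ Int.gcd N k = m.natAbs ∧ Int.gcd N (k - m) = m.natAbs := by
  constructor
  · rintro ⟨⟨a, rfl⟩, ⟨b, rfl⟩⟩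
    rcases eq_or_ne m 0 with rfl | hm
    · simp
    obtain ⟨c, hc⟩ := h
    have norm_eq : b ^ 2 - b + 1 = a * c :=
      mul_left_cancel₀ (pow_ne_zero 2 hm) (by linear_combination hc)
    have coprime_b : IsCoprime a b := ⟨c, 1 - b, by linear_combination -norm_eq⟩
    have coprime_b_sub_one : IsCoprime a (b - 1) := ⟨c, -b, by linear_combination -norm_eq⟩
    rw [← mul_sub_one, Int.gcd_mul_left, Int.gcd_mul_left,
      Int.isCoprime_iff_gcd_eq_one.1 coprime_b, Int.isCoprime_iff_gcd_eq_one.1 coprime_b_sub_one,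
      mul_one]
    exact ⟨rfl, rfl⟩
  · rintro ⟨hgcd, -⟩
    rw [← Int.natAbs_dvd, ← Int.natAbs_dvd (b := k), ← hgcd]
    exact ⟨Int.gcd_dvd_left .., Int.gcd_dvd_right ..⟩

section DihedralTriple

variable {H : Type*} [Group H] {t x y : H}

/-- The relations of a generalized dihedral group on generators `t, x, y`: `x` and `y` commute and
the involution `t` inverts both. The relations bounding the orders of `x` and `y` are left out, so
that the notion is stable under `(t, x, y) ↦ (tx, x⁻¹y, x⁻¹)`. -/
structure IsDihedralTriple (t x y : H) : Prop where
  sq_eq_one : t ^ 2 = 1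
  conj_left : t * x * t⁻¹ = x⁻¹
  conj_right : t * y * t⁻¹ = y⁻¹
  commute : Commute x y

lemma IsDihedralTriple.rotate (h : IsDihedralTriple t x y) :
    IsDihedralTriple (t * x) (x⁻¹ * y) x⁻¹ where
  sq_eq_one := calc
    (t * x) ^ 2 = t * x * t⁻¹ * t ^ 2 * x := by rw [pow_two]; group
    _ = 1 := by rw [h.conj_left, h.sq_eq_one, mul_one, inv_mul_cancel]
  conj_left := calc
    t * x * (x⁻¹ * y) * (t * x)⁻¹ = (t * y * t⁻¹) * (t * x * t⁻¹)⁻¹ := by group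
    _ = (x⁻¹ * y)⁻¹ := by rw [h.conj_left, h.conj_right, mul_inv_rev]
  conj_right := calc
    t * x * x⁻¹ * (t * x)⁻¹ = (t * x * t⁻¹)⁻¹ := by group
    _ = x⁻¹⁻¹ := by rw [h.conj_left]
  commute := (Commute.refl x⁻¹).mul_left h.commute.symm.inv_right

lemma exists_isDihedralTriple_zpow_mul_zpow_eq_one_iff (Λ : AddSubgroup (ℤ × ℤ)) :
    ∃ t u v : Equiv.Perm ((ℤ × ℤ) ⧸ Λ), IsDihedralTriple t u v ∧
      ∀ a b : ℤ, u ^ a * v ^ b = 1 ↔ (a, b) ∈ Λ := by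
  -- `t` acts on the quotient by negation, `u` and `v` by translation by the basis vectors.
  let translation : Multiplicative (ℤ × ℤ) →* Equiv.Perm ((ℤ × ℤ) ⧸ Λ) :=
    (MulAction.toPermHom (Multiplicative ((ℤ × ℤ) ⧸ Λ)) _).comp
      (QuotientAddGroup.mk' Λ).toMultiplicative
  have translation_apply (w : Multiplicative (ℤ × ℤ)) (z : (ℤ × ℤ) ⧸ Λ) :
      translation w z = QuotientAddGroup.mk' Λ w.toAdd + z := rfl
  have neg_conj (w : Multiplicative (ℤ × ℤ)) :
      Equiv.neg _ * translation w * (Equiv.neg _)⁻¹ = (translation w)⁻¹ := by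
    rw [← map_inv, Equiv.Perm.inv_def, Equiv.neg_symm]
    ext z
    simp [translation_apply, -map_inv, add_comm]
  have translation_eq_one_iff (w : Multiplicative (ℤ × ℤ)) :
      translation w = 1 ↔ w.toAdd ∈ Λ := by
    rw [← QuotientAddGroup.eq_zero_iff, Equiv.ext_iff]
    simp [translation_apply]
  refine ⟨Equiv.neg _, translation (.ofAdd (1, 0)), translation (.ofAdd (0, 1)),
    ⟨by ext; simp [pow_two], neg_conj _, neg_conj _, (Commute.all _ _).map _⟩, fun a b ↦ ?_⟩
  rw [← map_zpow translation, ← map_zpow translation, ← map_mul, translation_eq_one_iff]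
  simp

end DihedralTriple

section Lattice

/-- The lattice of exponents `(a, b)` for which the relations `x ^ N = 1` and `y ^ m = x ^ k`
between commuting elements force `x ^ a * y ^ b = 1`. -/
def relationLattice (m N k : ℤ) : AddSubgroup (ℤ × ℤ) :=
  AddSubgroup.closure {(N, 0), (-k, m)}

/-- The order-three map on exponents induced by `x ↦ x⁻¹ * y`, `y ↦ x⁻¹`. -/
def exponentRotation : ℤ × ℤ →+ ℤ × ℤ :=
  AddMonoidHom.mk' (fun v ↦ (-v.1 - v.2, v.1)) fun v w ↦ by
    ext
    · simp only [Prod.fst_add, Prod.snd_add]; ring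
    · rfl

lemma exponentRotation_apply (a b : ℤ) : exponentRotation (a, b) = (-a - b, a) := rfl

lemma mem_relationLattice {m N k a b : ℤ} :
    (a, b) ∈ relationLattice m N k ↔ ∃ r s : ℤ, r * N - s * k = a ∧ s * m = b := by
  simp [relationLattice, AddSubgroup.mem_closure_pair, sub_eq_add_neg]

lemma relationLattice_le_comap_exponentRotation_iff {m N k : ℤ} :
    relationLattice m N k ≤ (relationLattice m N k).comap exponentRotation ↔
      m ∣ N ∧ m ∣ k ∧ m * N ∣ k ^ 2 - m * k + m ^ 2 := by
  have basis_iff : relationLattice m N k ≤ (relationLattice m N k).comap exponentRotation ↔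
      (-N, N) ∈ relationLattice m N k ∧ (k - m, -k) ∈ relationLattice m N k := by
    conv_lhs => rw [relationLattice, AddSubgroup.closure_le, ← relationLattice]
    simp [Set.insert_subset_iff, exponentRotation_apply]
  rw [basis_iff, mem_relationLattice, mem_relationLattice]
  constructor
  · rintro ⟨⟨-, s, -, hN⟩, ⟨r, s', hr, hk⟩⟩
    exact ⟨⟨s, by linarith⟩, ⟨-s', by linarith⟩, ⟨-r, by linear_combination m * hr + k * hk⟩⟩
  · rintro ⟨⟨a, rfl⟩, ⟨b, rfl⟩, ⟨c, hc⟩⟩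
    refine ⟨⟨b - 1, a, by ring, by ring⟩, ⟨-c, -b, ?_, by ring⟩⟩
    rcases eq_or_ne m 0 with rfl | hm
    · simp
    · exact mul_left_cancel₀ hm (by linear_combination hc)

lemma one_zero_notMem_relationLattice {m N k : ℤ} (hmN : m ∣ N) (hmk : m ∣ k) (hN : ¬IsUnit N) :
    ((1, 0) : ℤ × ℤ) ∉ relationLattice m N k := by
  rw [mem_relationLattice]
  rintro ⟨r, s, hrs, hsm⟩
  have m_dvd_one : m ∣ 1 := hrs ▸ dvd_sub (hmN.mul_left r) (hmk.mul_left s)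
  have m_ne_zero : m ≠ 0 := by rintro rfl; simp at m_dvd_one
  obtain rfl : s = 0 := (mul_eq_zero.1 hsm).resolve_right m_ne_zero
  exact hN (isUnit_iff_dvd_one.2 ⟨r, by linarith⟩)

variable {H : Type*} [Group H] {x y : H}

lemma inv_mul_zpow_mul_inv_zpow (h : Commute x y) (a b : ℤ) :
    (x⁻¹ * y) ^ a * x⁻¹ ^ b = x ^ (-a - b) * y ^ a := by
  rw [h.inv_left.mul_zpow, mul_assoc, (h.symm.inv_right.zpow_zpow a b).eq, ← mul_assoc,
    ← zpow_add, inv_zpow', neg_add']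

lemma zpow_mul_zpow_eq_one_of_mem_relationLattice {m N k : ℤ} (hx : x ^ N = 1)
    (hy : y ^ m = x ^ k) {a b : ℤ} (hab : (a, b) ∈ relationLattice m N k) :
    x ^ a * y ^ b = 1 := by
  obtain ⟨r, s, rfl, rfl⟩ := mem_relationLattice.1 hab
  rw [zpow_sub, mul_comm r, mul_comm s k, mul_comm s m, zpow_mul, zpow_mul, zpow_mul, hx, hy]
  simp

end Lattice

section Presentation

variable {m n ℓ : ℕ}

lemma isDihedralTriple_gen : IsDihedralTriple (gent m n ℓ) (genx m n ℓ) (geny m n ℓ) where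
  sq_eq_one := PresentedGroup.one_of_mem (rels := rels m n ℓ) (by simp [rels])
  conj_left := mul_eq_one_iff_eq_inv.1 <|
    PresentedGroup.one_of_mem (rels := rels m n ℓ)
      (x := .of .t * .of .x * (.of .t)⁻¹ * .of .x) (by simp [rels])
  conj_right := mul_eq_one_iff_eq_inv.1 <|
    PresentedGroup.one_of_mem (rels := rels m n ℓ)
      (x := .of .t * .of .y * (.of .t)⁻¹ * .of .y) (by simp [rels])
  commute := mul_inv_eq_iff_eq_mul.1 <| mul_inv_eq_one.1 <|
    PresentedGroup.one_of_mem (rels := rels m n ℓ)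
      (x := .of .x * .of .y * (.of .x)⁻¹ * (.of .y)⁻¹) (by simp [rels])

lemma genx_pow_half : genx m n ℓ ^ (n / 2) = 1 :=
  PresentedGroup.one_of_mem (rels := rels m n ℓ) (by simp [rels])

lemma geny_pow : geny m n ℓ ^ m = genx m n ℓ ^ ((ℓ + m) / 2) :=
  mul_inv_eq_one.1 <| PresentedGroup.one_of_mem (rels := rels m n ℓ)
    (x := .of .y ^ m * (.of .x ^ ((ℓ + m) / 2))⁻¹) (by simp [rels])

variable {H : Type*} [Group H]

lemma IsDihedralTriple.exists_hom {t x y : H} (h : IsDihedralTriple t x y)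
    (hΛ : ∀ a b : ℤ, (a, b) ∈ relationLattice m (n / 2 : ℕ) ((ℓ + m) / 2 : ℕ) →
      x ^ a * y ^ b = 1) :
    ∃ f : G m n ℓ →* H, f (gent m n ℓ) = t ∧ f (genx m n ℓ) = x ∧ f (geny m n ℓ) = y := by
  have hx : x ^ (n / 2) = 1 := by
    have hmem := hΛ (n / 2 : ℕ) 0 (AddSubgroup.subset_closure (.inl rfl))
    rwa [zpow_zero, mul_one, zpow_natCast] at hmem
  have hy : y ^ m = x ^ ((ℓ + m) / 2) := by
    have hmem := hΛ (-((ℓ + m) / 2 : ℕ)) m (AddSubgroup.subset_closure (.inr rfl))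
    rw [zpow_neg, zpow_natCast, zpow_natCast, inv_mul_eq_one] at hmem
    exact hmem.symm
  let image : Gen → H
    | .t => t
    | .x => x
    | .y => y
  have image_rels : ∀ r ∈ rels m n ℓ, FreeGroup.lift image r = 1 := by
    simp only [rels, Set.mem_insert_iff, Set.mem_singleton_iff, forall_eq_or_imp, forall_eq,
      map_mul, map_inv, map_pow, FreeGroup.lift_apply_of, image]
    exact ⟨h.sq_eq_one, hx, mul_inv_eq_one.2 hy, mul_eq_one_iff_eq_inv.2 h.conj_left,
      mul_eq_one_iff_eq_inv.2 h.conj_right,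
      mul_inv_eq_one.2 (mul_inv_eq_iff_eq_mul.2 h.commute)⟩
  exact ⟨PresentedGroup.toGroup image_rels, PresentedGroup.toGroup.of _,
    PresentedGroup.toGroup.of _, PresentedGroup.toGroup.of _⟩

lemma hom_ext_connectionSet {f g : G m n ℓ →* H} (ht : f (gent m n ℓ) = g (gent m n ℓ))
    (htx : f (gent m n ℓ * genx m n ℓ) = g (gent m n ℓ * genx m n ℓ))
    (hty : f (gent m n ℓ * geny m n ℓ) = g (gent m n ℓ * geny m n ℓ)) : f = g := by
  rw [map_mul, map_mul, ht] at htx hty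
  refine PresentedGroup.ext fun a ↦ ?_
  cases a
  exacts [ht, mul_left_cancel htx, mul_left_cancel hty]

end Presentation

section Rotation

variable {m n ℓ : ℕ}

theorem genx_zpow_mul_geny_zpow_eq_one_iff {a b : ℤ} :
    genx m n ℓ ^ a * geny m n ℓ ^ b = 1 ↔
      (a, b) ∈ relationLattice m (n / 2 : ℕ) ((ℓ + m) / 2 : ℕ) := by
  refine ⟨fun h ↦ ?_, zpow_mul_zpow_eq_one_of_mem_relationLattice
    (mod_cast genx_pow_half) (mod_cast geny_pow)⟩
  obtain ⟨t, u, v, htriple, hrel⟩ := exists_isDihedralTriple_zpow_mul_zpow_eq_one_iff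
    (relationLattice m (n / 2 : ℕ) ((ℓ + m) / 2 : ℕ))
  obtain ⟨f, -, hfx, hfy⟩ := htriple.exists_hom fun a b ↦ (hrel a b).2
  rw [← hrel, ← hfx, ← hfy, ← map_zpow, ← map_zpow, ← map_mul, h, map_one]

/-- An endomorphism that permutes the connection set as the cycle `t ↦ tx ↦ ty ↦ t`. -/
structure CyclesConnectionSet (f : G m n ℓ →* G m n ℓ) : Prop where
  map_t : f (gent m n ℓ) = gent m n ℓ * genx m n ℓ
  map_tx : f (gent m n ℓ * genx m n ℓ) = gent m n ℓ * geny m n ℓ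
  map_ty : f (gent m n ℓ * geny m n ℓ) = gent m n ℓ

namespace CyclesConnectionSet

variable {f : G m n ℓ →* G m n ℓ}

lemma map_genx (hf : CyclesConnectionSet f) :
    f (genx m n ℓ) = (genx m n ℓ)⁻¹ * geny m n ℓ := by
  have h := hf.map_tx
  rw [map_mul, hf.map_t, mul_assoc] at h
  exact eq_inv_mul_of_mul_eq (mul_left_cancel h)

lemma map_geny (hf : CyclesConnectionSet f) : f (geny m n ℓ) = (genx m n ℓ)⁻¹ := by
  have h := hf.map_ty
  rw [map_mul, hf.map_t, mul_assoc, mul_eq_left] at h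
  exact eq_inv_of_mul_eq_one_right h

lemma comp_comp_self (hf : CyclesConnectionSet f) : f.comp (f.comp f) = MonoidHom.id _ := by
  apply hom_ext_connectionSet <;>
    simp only [MonoidHom.comp_apply, hf.map_t, hf.map_tx, hf.map_ty, MonoidHom.id_apply]

lemma exists_mulAut (hf : CyclesConnectionSet f) (hx : genx m n ℓ ≠ 1) :
    ∃ φ : MulAut (G m n ℓ), orderOf φ = 3 ∧ ⇑φ '' S m n ℓ = S m n ℓ := by
  let φ : MulAut (G m n ℓ) :=
    MonoidHom.toMulEquiv f (f.comp f) hf.comp_comp_self hf.comp_comp_self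
  have coe_φ : ⇑φ = f := rfl
  refine ⟨φ, orderOf_eq_prime ?_ fun hφ ↦ hx ?_, ?_⟩
  · ext z
    exact DFunLike.congr_fun hf.comp_comp_self z
  · have h := hf.map_t
    rw [← coe_φ, hφ, MulAut.one_apply] at h
    exact left_eq_mul.1 h
  · rw [coe_φ, S, Set.image_insert_eq, Set.image_pair, hf.map_t, hf.map_tx, hf.map_ty,
      Set.pair_comm, Set.insert_comm, Set.pair_comm]

end CyclesConnectionSet

theorem exists_cyclesConnectionSet_iff :
    (∃ f : G m n ℓ →* G m n ℓ, CyclesConnectionSet f) ↔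
      relationLattice m (n / 2 : ℕ) ((ℓ + m) / 2 : ℕ) ≤
        (relationLattice m (n / 2 : ℕ) ((ℓ + m) / 2 : ℕ)).comap exponentRotation := by
  have hxy : Commute (genx m n ℓ) (geny m n ℓ) := isDihedralTriple_gen.commute
  constructor
  · rintro ⟨f, hf⟩ ⟨a, b⟩ hab
    rw [AddSubgroup.mem_comap, exponentRotation_apply, ← genx_zpow_mul_geny_zpow_eq_one_iff,
      ← inv_mul_zpow_mul_inv_zpow hxy, ← hf.map_genx, ← hf.map_geny, ← map_zpow, ← map_zpow,
      ← map_mul, genx_zpow_mul_geny_zpow_eq_one_iff.2 hab, map_one]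
  · intro hΛ
    have rotate_eq_one (a b : ℤ)
        (hab : (a, b) ∈ relationLattice m (n / 2 : ℕ) ((ℓ + m) / 2 : ℕ)) :
        ((genx m n ℓ)⁻¹ * geny m n ℓ) ^ a * (genx m n ℓ)⁻¹ ^ b = 1 := by
      rw [inv_mul_zpow_mul_inv_zpow hxy, genx_zpow_mul_geny_zpow_eq_one_iff,
        ← exponentRotation_apply]
      exact hΛ hab
    obtain ⟨f, hft, hfx, hfy⟩ := isDihedralTriple_gen.rotate.exists_hom rotate_eq_one
    exact ⟨f, hft, by simp [hft, hfx], by simp [hft, hfy]⟩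

lemma exists_cyclesConnectionSet_of_orderOf_eq_three {φ : MulAut (G m n ℓ)} (hφ : orderOf φ = 3)
    (hS : ⇑φ '' S m n ℓ = S m n ℓ) : ∃ f : G m n ℓ →* G m n ℓ, CyclesConnectionSet f := by
  have φ_cube (z : G m n ℓ) : φ (φ (φ z)) = z :=
    DFunLike.congr_fun (hφ ▸ pow_orderOf_eq_one φ : φ ^ 3 = 1) z
  rcases fixes_or_cycles_of_mapsTo φ_cube (Set.mapsTo_iff_image_subset.2 hS.subset) with
    ⟨ht, htx, hty⟩ | ⟨ht, htx, hty⟩ | ⟨ht, hty, htx⟩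
  · have φ_eq_one : φ = 1 :=
      MulEquiv.toMonoidHom_injective (hom_ext_connectionSet ht htx hty)
    simp [φ_eq_one] at hφ
  · exact ⟨φ.toMonoidHom, ht, htx, hty⟩
  · exact ⟨φ.symm.toMonoidHom, φ.symm_apply_eq.2 htx.symm, φ.symm_apply_eq.2 hty.symm,
      φ.symm_apply_eq.2 ht.symm⟩

end Rotation

lemma relationLattice_le_comap_exponentRotation_iff_gcd {m n ℓ : ℕ} (hne : Even n)
    (hpar : ℓ % 2 = m % 2) :
    relationLattice m (n / 2 : ℕ) ((ℓ + m) / 2 : ℕ) ≤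
        (relationLattice m (n / 2 : ℕ) ((ℓ + m) / 2 : ℕ)).comap exponentRotation ↔
      (Int.gcd (n : ℤ) ((ℓ : ℤ) + m) = 2 * m ∧ Int.gcd (n : ℤ) ((ℓ : ℤ) - m) = 2 * m ∧
        (2 * m * n : ℤ) ∣ ((ℓ : ℤ) ^ 2 + 3 * m ^ 2)) := by
  rw [relationLattice_le_comap_exponentRotation_iff]
  generalize hN : ((n / 2 : ℕ) : ℤ) = N
  generalize hk : (((ℓ + m) / 2 : ℕ) : ℤ) = k
  have n_eq : (n : ℤ) = 2 * N := by grind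
  have ℓ_eq : (ℓ : ℤ) = 2 * k - m := by omega
  have gcd_add : Int.gcd n (ℓ + m) = 2 * Int.gcd N k := by
    rw [n_eq, ℓ_eq, sub_add_cancel, Int.gcd_mul_left]; rfl
  have gcd_sub : Int.gcd n (ℓ - m) = 2 * Int.gcd N (k - m) := by
    rw [n_eq, ℓ_eq, show 2 * k - m - m = 2 * (k - m) by ring, Int.gcd_mul_left]; rfl
  have dvd_iff : (2 * m * n : ℤ) ∣ (ℓ : ℤ) ^ 2 + 3 * m ^ 2 ↔
      (m * N : ℤ) ∣ k ^ 2 - m * k + m ^ 2 := by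
    rw [n_eq, ℓ_eq, ← mul_dvd_mul_iff_left (four_ne_zero (α := ℤ)) (b := m * N)]
    ring_nf
  rw [gcd_add, gcd_sub, dvd_iff, Nat.mul_right_inj two_ne_zero, Nat.mul_right_inj two_ne_zero,
    ← and_assoc, ← and_assoc]
  exact and_congr_left fun h ↦ dvd_and_dvd_iff_gcd_eq h

lemma genx_ne_one {m n ℓ : ℕ} (hn : n ≠ 2) (hne : Even n) (hmn : (m : ℤ) ∣ (n / 2 : ℕ))
    (hmk : (m : ℤ) ∣ ((ℓ + m) / 2 : ℕ)) : genx m n ℓ ≠ 1 := by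
  intro hx
  have half_not_unit : ¬IsUnit ((n / 2 : ℕ) : ℤ) := by
    rw [Int.isUnit_iff]; grind
  exact one_zero_notMem_relationLattice hmn hmk half_not_unit
    (genx_zpow_mul_geny_zpow_eq_one_iff.1 (by simp [hx]))

theorem statement10_general (m n ℓ : ℕ) (hn : n ≠ 2) (hne : Even n) (hpar : ℓ % 2 = m % 2) :
    (∃ φ : MulAut (G m n ℓ), orderOf φ = 3 ∧ ⇑φ '' S m n ℓ = S m n ℓ) ↔
      (Int.gcd (n : ℤ) ((ℓ : ℤ) + m) = 2 * m ∧ Int.gcd (n : ℤ) ((ℓ : ℤ) - m) = 2 * m ∧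
        (2 * m * n : ℤ) ∣ ((ℓ : ℤ) ^ 2 + 3 * m ^ 2)) := by
  rw [← relationLattice_le_comap_exponentRotation_iff_gcd hne hpar]
  constructor
  · rintro ⟨φ, hφ, hS⟩
    exact exists_cyclesConnectionSet_iff.1 (exists_cyclesConnectionSet_of_orderOf_eq_three hφ hS)
  · intro hΛ
    obtain ⟨f, hf⟩ := exists_cyclesConnectionSet_iff.2 hΛ
    obtain ⟨hmn, hmk, -⟩ := relationLattice_le_comap_exponentRotation_iff.1 hΛ
    exact hf.exists_mulAut (genx_ne_one hn hne hmn hmk)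

/-- **Lemma 4.4.** There exists an automorphism of `G` of order `3` fixing the set
`{t, tx, ty}` setwise iff `gcd(n,ℓ+m) = gcd(n,ℓ-m) = 2m` and `2mn ∣ ℓ² + 3m²`. -/
theorem statement10 (m n ℓ : ℕ) (hm : 0 < m) (hn : 4 ≤ n) (hne : Even n)
    (hl : ℓ ≤ n - 1) (hpar : ℓ % 2 = m % 2) :
    (∃ φ : MulAut (G m n ℓ), orderOf φ = 3 ∧ ⇑φ '' S m n ℓ = S m n ℓ) ↔
      (Int.gcd (n : ℤ) ((ℓ : ℤ) + m) = 2 * m ∧ Int.gcd (n : ℤ) ((ℓ : ℤ) - m) = 2 * m ∧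
        (2 * m * n : ℤ) ∣ ((ℓ : ℤ) ^ 2 + 3 * m ^ 2)) :=
  statement10_general m n ℓ (by lia) hne hpar

end HTGPaper
end

section
/- Let m and n be positive integers with n ≥ 4 even, let 0 ≤ ℓ ≤ n−1 be an integer of the same parity as m, let Γ = HTG(m,n,ℓ) identified with Cay(G;{t,tx,ty}), and let Aut_c(Γ) be the group of color permuting automorphisms of Γ. Then the set of color permuting automorphisms of Γ fixing the identity vertex 1 coincides with Aut(G; {t, tx, ty}), Aut_c(Γ) is the semidirect product G_L ⋊ Aut(G; {t, tx, ty}), and Γ is a normal Cayley graph of G if and only if Aut(Γ) = Aut_c(Γ). -/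
namespace HTGPaper

/-!
For a permutation `f` of a group `H` the following are equivalent: `f` carries left translations
to left translations; `f` carries right translations to right translations; `f` is affine, that
is, `f g = a * φ g` with `φ` an automorphism of `H`. Normality of a Cayley graph is the first
condition for all its automorphisms. If the generators are involutions, an edge of color `s` is
the step by `s` from either of its ends, so a color permuting map carries right translations by
generators to right translations. The right translations carried to right translations form a
subgroup, so this is the second condition.
-/

section Affine

variable {H : Type*} [Group H] {f : H → H}

/-- Affine permutations of a group, that is, the elements of its holomorph: a group automorphism
followed by a left translation. -/
def IsAffine (f : H → H) : Prop :=
  ∃ (a : H) (φ : MulAut H), ∀ g, f g = a * φ g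

/-- The elements `k` such that `f` carries right translation by `k` to a right translation, which
is how color permuting maps act on the generators. -/
def rightTranslationSubgroup {K : Type*} [Group K] (f : H → K) : Subgroup H where
  carrier := {k | ∃ k', ∀ g, f (g * k) = f g * k'}
  one_mem' := ⟨1, fun g => by simp only [mul_one]⟩
  mul_mem' := by
    rintro k l ⟨k', hk⟩ ⟨l', hl⟩
    exact ⟨k' * l', fun g => by rw [← mul_assoc, hl, hk, mul_assoc]⟩
  inv_mem' := by
    rintro k ⟨k', hk⟩
    exact ⟨k'⁻¹, fun g => by rw [eq_mul_inv_iff_mul_eq, ← hk, inv_mul_cancel_right]⟩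

theorem isAffine_of_rightTranslationSubgroup_eq_top (hf : f.Bijective)
    (h : rightTranslationSubgroup f = ⊤) : IsAffine f := by
  have map_mul_div (g k : H) : (f 1)⁻¹ * f (g * k) = (f 1)⁻¹ * f g * ((f 1)⁻¹ * f k) := by
    obtain ⟨k', hk⟩ : k ∈ rightTranslationSubgroup f := h ▸ Subgroup.mem_top k
    have hk_one : f k = f 1 * k' := by simpa only [one_mul] using hk 1
    rw [hk, hk_one, inv_mul_cancel_left, mul_assoc]
  exact ⟨f 1, MulEquiv.mk' ((Equiv.ofBijective f hf).trans (Equiv.mulLeft (f 1)⁻¹)) map_mul_div,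
    fun g => (mul_inv_cancel_left (f 1) (f g)).symm⟩

theorem isAffine_iff_forall_exists_map_mul_left (hf : f.Bijective) :
    IsAffine f ↔ ∀ a, ∃ b, ∀ g, f (a * g) = b * f g := by
  constructor
  · rintro ⟨c, φ, hφ⟩ a
    exact ⟨c * φ a * c⁻¹, fun g => by simp only [hφ, map_mul]; group⟩
  · refine fun h => isAffine_of_rightTranslationSubgroup_eq_top hf <|
      (Subgroup.eq_top_iff' _).2 fun k => ⟨(f 1)⁻¹ * f k, fun g => ?_⟩
    obtain ⟨b, hb⟩ := h g
    have hb_one : f g = b * f 1 := by simpa only [mul_one] using hb 1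
    rw [hb, hb_one, mul_assoc, mul_inv_cancel_left]

theorem eq_map_one_of_forall_eq_mul {a : H} {φ : MulAut H} (h : ∀ g, f g = a * φ g) :
    a = f 1 := by
  rw [h, map_one, mul_one]

theorem prodMk_eq_of_forall_eq_mul {a b : H} {φ ψ : MulAut H} (hφ : ∀ g, f g = a * φ g)
    (hψ : ∀ g, f g = b * ψ g) : (a, φ) = (b, ψ) := by
  obtain rfl : a = b :=
    (eq_map_one_of_forall_eq_mul hφ).trans (eq_map_one_of_forall_eq_mul hψ).symm
  exact congrArg _ (MulEquiv.ext fun g => mul_left_cancel ((hφ g).symm.trans (hψ g)))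

end Affine

section Cayley

variable {H : Type*} [Group H] {T : Set H}

theorem inv_mem_of_mul_self_eq_one (hT : ∀ s ∈ T, s * s = 1) : ∀ s ∈ T, s⁻¹ ∈ T :=
  fun s hs => by rwa [inv_eq_of_mul_eq_one_left (hT s hs)]

theorem cayley_adj_iff (hT : ∀ s ∈ T, s⁻¹ ∈ T) {g h : H} :
    (cayley H T).Adj g h ↔ g ≠ h ∧ g⁻¹ * h ∈ T := by
  have exists_iff (g h : H) : (∃ s ∈ T, h = g * s) ↔ g⁻¹ * h ∈ T := by
    simp only [← inv_mul_eq_iff_eq_mul, exists_eq_right']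
  have mem_symm : h⁻¹ * g ∈ T → g⁻¹ * h ∈ T := fun hs => by
    simpa only [mul_inv_rev, inv_inv] using hT _ hs
  rw [cayley, SimpleGraph.fromRel_adj, exists_iff, exists_iff, or_iff_left_of_imp mem_symm]

theorem mulAut_image_eq_of_cayley_iso (hT : ∀ s ∈ T, s⁻¹ ∈ T) (f : cayley H T ≃g cayley H T)
    {a : H} {φ : MulAut H} (hf : ∀ g, f g = a * φ g) : φ '' T = T := by
  have preimage_eq : φ ⁻¹' T = T := by
    ext s
    obtain rfl | hs := eq_or_ne s 1
    · rw [Set.mem_preimage, map_one]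
    · simpa [cayley_adj_iff hT, hf, hs, hs.symm] using f.map_adj_iff (v := 1) (w := s)
  simpa only [preimage_eq] using φ.surjective.image_preimage T

theorem isNormalCayley_iff_forall_isAffine :
    IsNormalCayley H T ↔ ∀ f : cayley H T ≃g cayley H T, IsAffine f := by
  refine forall_congr' fun f => ?_
  rw [isAffine_iff_forall_exists_map_mul_left f.bijective]
  refine forall_congr' fun a => exists_congr fun b => ?_
  rw [f.surjective.forall]
  simp only [f.symm_apply_apply]

/-- The edges of a Cayley graph colored by the generator `s`. -/
def edgeColor (s : H) : Set (Sym2 H) :=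
  {e | ∃ g, e = s(g, g * s)}

/-- The map `f` sends each color class of `Cay(H;T)` onto a color class, the colors being the
elements of `T`; for `Cay(G;{t,tx,ty})` this is `IsColorPermuting`. -/
def PermutesColors (T : Set H) (f : H → H) : Prop :=
  ∀ C ∈ edgeColor '' T, Sym2.map f '' C ∈ edgeColor '' T

theorem permutesColors_of_forall_eq_mul {f : H → H} {a : H} {φ : MulAut H} (hφ : φ '' T = T)
    (hf : ∀ g, f g = a * φ g) : PermutesColors T f := by
  rintro _ ⟨s, hs, rfl⟩
  refine ⟨φ s, hφ ▸ Set.mem_image_of_mem φ hs, Set.Subset.antisymm ?_ ?_⟩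
  · rintro _ ⟨g, rfl⟩
    exact ⟨_, ⟨φ.symm (a⁻¹ * g), rfl⟩, by simp [hf, mul_assoc]⟩
  · rintro _ ⟨_, ⟨g, rfl⟩, rfl⟩
    exact ⟨a * φ g, by simp only [Sym2.map_mk, hf, map_mul, mul_assoc]⟩

theorem mk_mem_edgeColor_iff {s g h : H} (hs : s * s = 1) :
    s(g, h) ∈ edgeColor s ↔ h = g * s := by
  constructor
  · rintro ⟨k, hk⟩
    obtain ⟨rfl, rfl⟩ | ⟨rfl, rfl⟩ := Sym2.eq_iff.1 hk
    · rfl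
    · rw [mul_assoc, hs, mul_one]
  · rintro rfl
    exact ⟨g, rfl⟩

theorem PermutesColors.isAffine (hT : ∀ s ∈ T, s * s = 1) (hgen : Subgroup.closure T = ⊤)
    {f : H → H} (hf : f.Bijective) (hcol : PermutesColors T f) : IsAffine f := by
  refine isAffine_of_rightTranslationSubgroup_eq_top hf (top_le_iff.1 ?_)
  rw [← hgen, Subgroup.closure_le]
  intro s hs
  obtain ⟨s', hs', himage⟩ := hcol _ (Set.mem_image_of_mem edgeColor hs)
  refine ⟨s', fun g => (mk_mem_edgeColor_iff (hT s' hs')).1 ?_⟩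
  rw [himage]
  exact ⟨_, ⟨g, rfl⟩, rfl⟩

theorem permutesColors_iff_isAffine (hT : ∀ s ∈ T, s * s = 1) (hgen : Subgroup.closure T = ⊤)
    (f : cayley H T ≃g cayley H T) : PermutesColors T f ↔ IsAffine f := by
  refine ⟨fun hcol => hcol.isAffine hT hgen f.bijective, ?_⟩
  rintro ⟨a, φ, hf⟩
  exact permutesColors_of_forall_eq_mul
    (mulAut_image_eq_of_cayley_iso (inv_mem_of_mul_self_eq_one hT) f hf) hf

theorem statement12_general (hT : ∀ s ∈ T, s * s = 1) (hgen : Subgroup.closure T = ⊤) :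
    (∀ f : cayley H T ≃g cayley H T,
      (PermutesColors T f ∧ f 1 = 1) ↔
        ∃ φ : MulAut H, φ '' T = T ∧ ∀ g, f g = φ g) ∧
    (∀ f : cayley H T ≃g cayley H T,
      PermutesColors T f ↔
        ∃! aφ : H × MulAut H, aφ.2 '' T = T ∧ ∀ g, f g = aφ.1 * aφ.2 g) ∧
    (IsNormalCayley H T ↔ ∀ f : cayley H T ≃g cayley H T, PermutesColors T f) := by
  refine ⟨fun f => ⟨?_, ?_⟩, fun f => ⟨?_, ?_⟩, ?_⟩
  · rintro ⟨hcol, hone⟩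
    obtain ⟨a, φ, hf⟩ := (permutesColors_iff_isAffine hT hgen f).1 hcol
    refine ⟨φ, mulAut_image_eq_of_cayley_iso (inv_mem_of_mul_self_eq_one hT) f hf, fun g => ?_⟩
    rw [hf, eq_map_one_of_forall_eq_mul hf, hone, one_mul]
  · rintro ⟨φ, hφ, hf⟩
    refine ⟨permutesColors_of_forall_eq_mul (a := 1) hφ fun g => ?_, ?_⟩
    · rw [hf, one_mul]
    · rw [hf, map_one]
  · intro hcol
    obtain ⟨a, φ, hf⟩ := (permutesColors_iff_isAffine hT hgen f).1 hcol
    exact ⟨(a, φ), ⟨mulAut_image_eq_of_cayley_iso (inv_mem_of_mul_self_eq_one hT) f hf, hf⟩,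
      fun bψ hbψ => prodMk_eq_of_forall_eq_mul hbψ.2 hf⟩
  · rintro ⟨aφ, ⟨hφ, hf⟩, -⟩
    exact permutesColors_of_forall_eq_mul hφ hf
  · simp only [isNormalCayley_iff_forall_isAffine, permutesColors_iff_isAffine hT hgen]

end Cayley

section Honeycomb

variable {m n ℓ : ℕ}

theorem mul_self_eq_one_of_mem_S : ∀ s ∈ S m n ℓ, s * s = 1 := by
  have rel_t : gent m n ℓ ^ 2 = 1 :=
    PresentedGroup.one_of_mem (rels := rels m n ℓ) (.inl rfl)
  have rel_tx : gent m n ℓ * genx m n ℓ * (gent m n ℓ)⁻¹ * genx m n ℓ = 1 :=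
    PresentedGroup.one_of_mem (rels := rels m n ℓ) (.inr <| .inr <| .inr <| .inl rfl)
  have rel_ty : gent m n ℓ * geny m n ℓ * (gent m n ℓ)⁻¹ * geny m n ℓ = 1 :=
    PresentedGroup.one_of_mem (rels := rels m n ℓ) (.inr <| .inr <| .inr <| .inr <| .inl rfl)
  have t_mul_self : gent m n ℓ * gent m n ℓ = 1 := by rw [← sq, rel_t]
  rw [inv_eq_of_mul_eq_one_left t_mul_self, mul_assoc] at rel_tx rel_ty
  rintro s (rfl | rfl | rfl)
  exacts [t_mul_self, rel_tx, rel_ty]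

theorem closure_S : Subgroup.closure (S m n ℓ) = ⊤ := by
  rw [eq_top_iff, ← PresentedGroup.closure_range_of (rels m n ℓ), Subgroup.closure_le]
  have ht : gent m n ℓ ∈ Subgroup.closure (S m n ℓ) :=
    Subgroup.subset_closure (.inl rfl)
  have htx : gent m n ℓ * genx m n ℓ ∈ Subgroup.closure (S m n ℓ) :=
    Subgroup.subset_closure (.inr (.inl rfl))
  have hty : gent m n ℓ * geny m n ℓ ∈ Subgroup.closure (S m n ℓ) :=
    Subgroup.subset_closure (.inr (.inr rfl))
  rintro _ ⟨_ | _ | _, rfl⟩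
  · exact ht
  · exact (Subgroup.mul_mem_cancel_left _ ht).1 htx
  · exact (Subgroup.mul_mem_cancel_left _ ht).1 hty

theorem colorClasses_eq_image_edgeColor : colorClasses m n ℓ = edgeColor '' S m n ℓ := by
  simp only [S, Set.image_insert_eq, Set.image_singleton]
  rfl

theorem isColorPermuting_iff_permutesColors
    {f : cayley (G m n ℓ) (S m n ℓ) ≃g cayley (G m n ℓ) (S m n ℓ)} :
    IsColorPermuting f ↔ PermutesColors (S m n ℓ) f := by
  rw [IsColorPermuting, PermutesColors, colorClasses_eq_image_edgeColor]

end Honeycomb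

/-- The color permuting automorphisms of `Γ = HTG(m,n,ℓ) = Cay(G;{t,tx,ty})` fixing the
identity vertex are exactly the elements of `Aut(G;{t,tx,ty})`; `Aut_c(Γ)` is the
semidirect product `G_L ⋊ Aut(G;{t,tx,ty})`; and `Γ` is a normal Cayley graph of `G`
iff `Aut(Γ) = Aut_c(Γ)`. -/
theorem statement12 (m n ℓ : ℕ) (hm : 0 < m) (hn : 4 ≤ n) (hne : Even n)
    (hl : ℓ ≤ n - 1) (hpar : ℓ % 2 = m % 2) :
    (∀ f : cayley (G m n ℓ) (S m n ℓ) ≃g cayley (G m n ℓ) (S m n ℓ),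
      (IsColorPermuting f ∧ f 1 = 1) ↔
        ∃ φ : MulAut (G m n ℓ), ⇑φ '' S m n ℓ = S m n ℓ ∧ ∀ g, f g = φ g) ∧
    (∀ f : cayley (G m n ℓ) (S m n ℓ) ≃g cayley (G m n ℓ) (S m n ℓ),
      IsColorPermuting f ↔
        ∃! aφ : G m n ℓ × MulAut (G m n ℓ),
          ⇑aφ.2 '' S m n ℓ = S m n ℓ ∧ ∀ g, f g = aφ.1 * aφ.2 g) ∧
    (IsNormalCayley (G m n ℓ) (S m n ℓ) ↔
      ∀ f : cayley (G m n ℓ) (S m n ℓ) ≃g cayley (G m n ℓ) (S m n ℓ),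
        IsColorPermuting f) := by
  simpa only [isColorPermuting_iff_permutesColors] using
    statement12_general (mul_self_eq_one_of_mem_S (m := m) (n := n) (ℓ := ℓ)) closure_S

end HTGPaper
end

section
/- Let m and n be positive integers with n ≥ 4 even, let 0 ≤ ℓ ≤ n/2 be an integer of the same parity as m, and let Γ = HTG(m,n,ℓ). Then Γ has girth 4 if and only if one of the following holds: (i) n = 4; (ii) m = 1, n ≥ 6 and ℓ = 3; (iii) m = 1, n ≥ 6, n ≡ 2 (mod 4) and ℓ = n/2; (iv) m = 1, n ≥ 8, n ≡ 0 (mod 4) and ℓ = (n−2)/2; (v) m = 2, n ≥ 6 and ℓ ∈ {0, 2}. -/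
namespace HTGPaper

/-!
The graph `HTG(m,n,ℓ)` is the quotient of the plane honeycomb on `ℤ × ℤ`, drawn as a brick wall, by
the lattice generated by `(0,n)` and `(m,-ℓ)`. From a vertex with odd coordinate sum the steps along
edges are `(0,±1)` and `(1,0)`, and from the other vertices their negatives, so a 4-cycle in the
quotient is an alternating sum `s₁ - s₂ + s₃ - s₄` of such steps lying in the lattice. Since the
honeycomb itself has no 4-cycle, this sum is, up to sign, one of the vectors `(0,4)`, `(1,±3)`,
`(2,0)`, `(2,±2)`, where `(2,±2)` counts only if `(1,±1)` is not in the lattice, as the walk would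
otherwise turn straight back. Each vector lies in the lattice exactly under a divisibility condition
on `m`, `n`, `ℓ`, and `ℓ ≤ n / 2` leaves only the listed cases. The graph being bipartite, girth 4
means that there is such a cycle.
-/

section Girth

variable {V : Type*} {Γ : SimpleGraph V}

/-- The graph contains a 4-cycle, given by its vertices in cyclic order. -/
def HasSquare (Γ : SimpleGraph V) : Prop :=
  ∃ a b c d, Γ.Adj a b ∧ Γ.Adj b c ∧ Γ.Adj c d ∧ Γ.Adj d a ∧ a ≠ c ∧ b ≠ d

theorem hasSquare_iff_exists_isCycle :
    HasSquare Γ ↔ ∃ (a : V) (w : Γ.Walk a a), w.IsCycle ∧ w.length = 4 := by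
  constructor
  · rintro ⟨a, b, c, d, hab, hbc, hcd, hda, hac, hbd⟩
    refine ⟨a, .cons hab (.cons hbc (.cons hcd (.cons hda .nil))), ?_, rfl⟩
    have := hab.ne
    have := hbc.ne
    have := hcd.ne
    have := hda.ne
    rw [SimpleGraph.Walk.cons_isCycle_iff, SimpleGraph.Walk.isPath_def]
    simp only [SimpleGraph.Walk.support_cons, SimpleGraph.Walk.support_nil,
      SimpleGraph.Walk.edges_cons, SimpleGraph.Walk.edges_nil, List.nodup_cons, List.nodup_nil,
      List.mem_cons, List.not_mem_nil, Sym2.eq_iff]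
    grind
  · rintro ⟨a, w, hw, hlen⟩
    match w, hw, hlen with
    | .cons hab (.cons hbc (.cons hcd (.cons hda .nil))), hw, _ =>
      have := hw.support_nodup
      simp only [SimpleGraph.Walk.support_cons, SimpleGraph.Walk.support_nil, List.tail_cons,
        List.nodup_cons, List.mem_cons] at this
      exact ⟨_, _, _, _, hab, hbc, hcd, hda, by tauto, by tauto⟩

theorem girth_eq_four_iff_hasSquare (hΓ : Γ.IsBipartite) : Γ.girth = 4 ↔ HasSquare Γ := by
  rw [hasSquare_iff_exists_isCycle]
  constructor
  · intro hgirth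
    have hcyc : ¬ Γ.IsAcyclic := fun h => by simp [h.girth_eq_zero] at hgirth
    obtain ⟨a, w, hw, hlen⟩ := SimpleGraph.exists_girth_eq_length.mpr hcyc
    exact ⟨a, w, hw, by omega⟩
  · rintro ⟨a, w, hw, hlen⟩
    obtain ⟨b, u, hu, hlen'⟩ := SimpleGraph.exists_girth_eq_length.mpr fun h => h w hw
    have hle := hw.girth_le_length
    have hge := hu.three_le_length
    obtain ⟨k, hk⟩ := SimpleGraph.two_colorable_iff_forall_loop_even.mp hΓ b u
    omega

end Girth

section PeriodLattice

/-- The lattice of translations of `ℤ × ℤ` by which the plane honeycomb is factored to obtain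
`HTG(m,n,ℓ)`: going around a column is the translation by `(0,n)`, and going through all
`m` columns amounts to shifting the row by `ℓ`. -/
def periodLattice (m n ℓ : ℕ) : AddSubgroup (ℤ × ℤ) :=
  AddSubgroup.closure {(0, (n : ℤ)), ((m : ℤ), -(ℓ : ℤ))}

variable {m n ℓ : ℕ}

theorem mem_periodLattice_iff {p : ℤ × ℤ} :
    p ∈ periodLattice m n ℓ ↔ ∃ k : ℤ, p.1 = m * k ∧ (n : ℤ) ∣ p.2 + ℓ * k := by
  simp only [periodLattice, AddSubgroup.mem_closure_pair, Prod.ext_iff, Prod.fst_add,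
    Prod.snd_add, Prod.smul_fst, Prod.smul_snd, smul_eq_mul]
  constructor
  · rintro ⟨a, b, hfst, hsnd⟩
    exact ⟨b, by linarith, a, by linarith⟩
  · rintro ⟨k, hfst, a, hsnd⟩
    exact ⟨a, k, by linarith, by linarith⟩

theorem zero_mk_mem_periodLattice_iff (hm : 0 < m) {y : ℤ} :
    (0, y) ∈ periodLattice m n ℓ ↔ (n : ℤ) ∣ y := by
  rw [mem_periodLattice_iff]
  constructor
  · rintro ⟨k, hk, hdvd⟩
    obtain rfl : k = 0 := by
      rcases mul_eq_zero.mp hk.symm with h | h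
      · omega
      · exact h
    simpa using hdvd
  · exact fun h => ⟨0, by simpa using h⟩

theorem one_mk_mem_periodLattice_iff {y : ℤ} :
    (1, y) ∈ periodLattice m n ℓ ↔ m = 1 ∧ (n : ℤ) ∣ y + ℓ := by
  rw [mem_periodLattice_iff]
  constructor
  · rintro ⟨k, hk, hdvd⟩
    have hm : m = 1 := by
      exact_mod_cast Int.eq_one_of_dvd_one (Int.natCast_nonneg m) ⟨k, hk⟩
    subst hm
    obtain rfl : k = 1 := by simpa using hk.symm
    exact ⟨rfl, by simpa using hdvd⟩
  · rintro ⟨rfl, hdvd⟩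
    exact ⟨1, by simpa using hdvd⟩

theorem two_mk_mem_periodLattice_iff {y : ℤ} :
    (2, y) ∈ periodLattice m n ℓ ↔
      (m = 1 ∧ (n : ℤ) ∣ y + 2 * ℓ) ∨ (m = 2 ∧ (n : ℤ) ∣ y + ℓ) := by
  rw [mem_periodLattice_iff]
  constructor
  · rintro ⟨k, hk, hdvd⟩
    have hm : m ∣ 2 := Int.natCast_dvd_natCast.mp ⟨k, hk⟩
    rcases (Nat.dvd_prime Nat.prime_two).mp hm with rfl | rfl
    · obtain rfl : k = 2 := by simpa using hk.symm
      exact .inl ⟨rfl, by simpa [mul_comm] using hdvd⟩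
    · obtain rfl : k = 1 := by simp at hk; omega
      exact .inr ⟨rfl, by simpa using hdvd⟩
  · rintro (⟨rfl, hdvd⟩ | ⟨rfl, hdvd⟩)
    · exact ⟨2, by simpa [mul_comm] using hdvd⟩
    · exact ⟨1, by simpa using hdvd⟩

end PeriodLattice

namespace HTG

variable {m n ℓ : ℕ}

/-- The colour classes of the bipartition of `HTG(m,n,ℓ)`: a vertex is odd if its coordinates
have different parities. -/
def IsOddVertex (v : ZMod m × ZMod n) : Prop := Odd (v.1.val + v.2.val)

/-- Translation to the next column, with the shift by `ℓ` when passing from column `m - 1` to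
column `0`. The cross edges of `HTG(m,n,ℓ)` join each odd vertex to its translate. -/
def nextColumn (ℓ : ℕ) (v : ZMod m × ZMod n) : ZMod m × ZMod n :=
  if v.1.val = m - 1 then (0, v.2 + ℓ) else (v.1 + 1, v.2)

/-- The covering map from the plane honeycomb, with vertex set `ℤ × ℤ`, onto `HTG(m,n,ℓ)`. The row
is shifted by `ℓ` for each complete passage through the `m` columns. -/
def proj (m n ℓ : ℕ) (p : ℤ × ℤ) : ZMod m × ZMod n :=
  ((p.1 : ZMod m), ((p.2 + ℓ * (p.1 / m) : ℤ) : ZMod n))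

/-- The steps along edges of the plane honeycomb from a vertex with odd coordinate sum. From a
vertex with even coordinate sum the steps are their negatives. -/
def oddSteps : Finset (ℤ × ℤ) := {(0, 1), (0, -1), (1, 0)}

theorem proj_surjective : Function.Surjective (proj m n ℓ) := by
  rintro ⟨i, j⟩
  obtain ⟨x, rfl⟩ := ZMod.intCast_surjective i
  obtain ⟨y, rfl⟩ := ZMod.intCast_surjective j
  exact ⟨(x, y - ℓ * (x / m)), by simp [proj]⟩

theorem proj_add_zero_one (p : ℤ × ℤ) :
    proj m n ℓ (p + (0, 1)) = proj m n ℓ p + (0, 1) := by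
  simp only [proj, Prod.fst_add, Prod.snd_add, add_zero, Prod.mk_add_mk, Prod.mk.injEq, true_and]
  push_cast
  ring

section Columns

variable [NeZero m]

theorem proj_eq_proj_iff {p q : ℤ × ℤ} :
    proj m n ℓ p = proj m n ℓ q ↔ p - q ∈ periodLattice m n ℓ := by
  have hm : (m : ℤ) ≠ 0 := by exact_mod_cast NeZero.ne m
  have snd_iff {k : ℤ} (hk : p.1 - q.1 = m * k) :
      ((p.2 + ℓ * (p.1 / m) : ℤ) : ZMod n) = ((q.2 + ℓ * (q.1 / m) : ℤ) : ZMod n) ↔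
        (n : ℤ) ∣ p.2 - q.2 + ℓ * k := by
    have hdiv : p.1 / m = q.1 / m + k := by
      rw [show p.1 = q.1 + m * k by linarith, Int.add_mul_ediv_left _ _ hm]
    rw [eq_comm, ZMod.intCast_eq_intCast_iff_dvd_sub, hdiv]
    ring_nf
  simp only [mem_periodLattice_iff, proj, Prod.ext_iff, Prod.fst_sub, Prod.snd_sub]
  constructor
  · rintro ⟨hfst, hsnd⟩
    obtain ⟨k, hk⟩ := (ZMod.intCast_eq_intCast_iff_dvd_sub _ _ m).mp hfst.symm
    exact ⟨k, hk, (snd_iff hk).mp hsnd⟩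
  · rintro ⟨k, hk, hdvd⟩
    exact ⟨((ZMod.intCast_eq_intCast_iff_dvd_sub _ _ m).mpr ⟨k, hk⟩).symm, (snd_iff hk).mpr hdvd⟩

theorem proj_add_one_zero (p : ℤ × ℤ) :
    proj m n ℓ (p + (1, 0)) = nextColumn ℓ (proj m n ℓ p) := by
  have hm : 0 < (m : ℤ) := by exact_mod_cast NeZero.pos m
  have hval : (((p.1 : ZMod m).val : ℕ) : ℤ) = p.1 % m := ZMod.val_intCast p.1
  have hlt := Int.emod_lt_of_pos p.1 hm
  have hdecomp := Int.mul_ediv_add_emod p.1 m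
  by_cases hlast : (p.1 : ZMod m).val = m - 1
  · have hsucc : p.1 + 1 = (p.1 / m + 1) * m := by
      have : p.1 % m = m - 1 := by omega
      linarith
    have hdiv : (p.1 + 1) / m = p.1 / m + 1 := by rw [hsucc, Int.mul_ediv_cancel _ hm.ne']
    have hfst : ((p.1 + 1 : ℤ) : ZMod m) = 0 := by simp [hsucc]
    have hsnd : p.2 + ℓ * (p.1 / m + 1) = p.2 + ℓ * (p.1 / m) + ℓ := by ring
    rw [nextColumn, if_pos (by exact hlast)]
    simp only [proj, Prod.fst_add, Prod.snd_add, add_zero, hdiv, hfst, hsnd]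
    push_cast
    rfl
  · have hdiv : (p.1 + 1) / m = p.1 / m := by
      have : p.1 % m + 1 < m := by omega
      rw [Int.ediv_eq_iff_of_pos hm]
      constructor <;> linarith [Int.emod_nonneg p.1 hm.ne']
    simp [proj, nextColumn, if_neg hlast, hdiv]

theorem isOddVertex_and_eq_nextColumn_iff (hpar : ℓ % 2 = m % 2) {v w : ZMod m × ZMod n} :
    IsOddVertex v ∧ w = nextColumn ℓ v ↔
      (v.1.val ≠ m - 1 ∧ w.1 = v.1 + 1 ∧ w.2 = v.2 ∧ v.1.val % 2 ≠ v.2.val % 2) ∨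
      (v.1.val = m - 1 ∧ w.1 = 0 ∧ w.2 = v.2 + (ℓ : ZMod n) ∧ v.2.val % 2 = m % 2) := by
  have hm := NeZero.pos m
  rw [IsOddVertex, Nat.odd_iff, nextColumn]
  split_ifs with hlast
  · have : (v.1.val + v.2.val) % 2 = 1 ↔ v.2.val % 2 = m % 2 := by omega
    rw [Prod.ext_iff]
    tauto
  · have : (v.1.val + v.2.val) % 2 = 1 ↔ v.1.val % 2 ≠ v.2.val % 2 := by omega
    rw [Prod.ext_iff]
    tauto

theorem adj_iff (hpar : ℓ % 2 = m % 2) {v w : ZMod m × ZMod n} :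
    (HTG m n ℓ).Adj v w ↔ v ≠ w ∧ (w = v + (0, 1) ∨ v = w + (0, 1) ∨
      (IsOddVertex v ∧ w = nextColumn ℓ v) ∨ (IsOddVertex w ∧ v = nextColumn ℓ w)) := by
  simp only [HTG, SimpleGraph.fromRel_adj, ← isOddVertex_and_eq_nextColumn_iff hpar, Prod.ext_iff,
    Prod.fst_add, Prod.snd_add, add_zero, eq_sub_iff_add_eq]
  grind

end Columns

section Parity

variable [NeZero m] [NeZero n]

theorem isOddVertex_proj_iff (hn : Even n) (hpar : ℓ % 2 = m % 2) (p : ℤ × ℤ) :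
    IsOddVertex (proj m n ℓ p) ↔ Odd (p.1 + p.2) := by
  have hfst : ((proj m n ℓ p).1.val : ℤ) = p.1 - m * (p.1 / m) := by
    rw [proj, ZMod.val_intCast, Int.emod_def]
  have hsnd : Even (((proj m n ℓ p).2.val : ℤ) - (p.2 + ℓ * (p.1 / m))) := by
    rw [proj, ZMod.val_intCast, Int.emod_def]
    simp [hn]
  have hsub : Even ((ℓ : ℤ) - m) := by
    rw [Int.even_iff]
    omega
  have hdiff : Even (((proj m n ℓ p).1.val + (proj m n ℓ p).2.val : ℤ) - (p.1 + p.2)) := by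
    have hsum := hsnd.add (hsub.mul_right (p.1 / m))
    rw [hfst]
    ring_nf at hsum ⊢
    exact hsum
  rw [IsOddVertex, ← Int.odd_coe_nat]
  push_cast
  have := Int.even_sub.mp hdiff
  rw [← Int.not_even_iff_odd, ← Int.not_even_iff_odd, this]

theorem odd_add_of_mem_oddSteps {s : ℤ × ℤ} (hs : s ∈ oddSteps) : Odd (s.1 + s.2) := by
  fin_cases hs <;> decide

theorem even_add_of_mem_oddSteps {p s : ℤ × ℤ} (hp : Odd (p.1 + p.2)) (hs : s ∈ oddSteps) :
    Even ((p + s).1 + (p + s).2) := by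
  rw [Prod.fst_add, Prod.snd_add, add_add_add_comm]
  exact hp.add_odd (odd_add_of_mem_oddSteps hs)

theorem odd_sub_of_mem_oddSteps {p s : ℤ × ℤ} (hp : Even (p.1 + p.2)) (hs : s ∈ oddSteps) :
    Odd ((p - s).1 + (p - s).2) := by
  rw [Prod.fst_sub, Prod.snd_sub, sub_add_sub_comm]
  exact hp.sub_odd (odd_add_of_mem_oddSteps hs)

theorem adj_proj_add_of_mem_oddSteps (hn : Even n) (hpar : ℓ % 2 = m % 2) {p s : ℤ × ℤ}
    (hp : Odd (p.1 + p.2)) (hs : s ∈ oddSteps) :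
    (HTG m n ℓ).Adj (proj m n ℓ p) (proj m n ℓ (p + s)) := by
  have hps : ¬ Odd ((p + s).1 + (p + s).2) :=
    Int.not_odd_iff_even.mpr (even_add_of_mem_oddSteps hp hs)
  rw [← isOddVertex_proj_iff hn hpar] at hp hps
  refine (adj_iff hpar).mpr ⟨fun h => hps (h ▸ hp), ?_⟩
  simp only [oddSteps, Finset.mem_insert, Finset.mem_singleton] at hs
  rcases hs with rfl | rfl | rfl
  · exact .inl (proj_add_zero_one p)
  · refine .inr (.inl ?_)
    rw [← proj_add_zero_one, add_assoc, show ((0, -1) + (0, 1) : ℤ × ℤ) = 0 from rfl, add_zero]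
  · exact .inr (.inr (.inl ⟨hp, proj_add_one_zero p⟩))

theorem adj_iff_exists_oddSteps (hn : Even n) (hpar : ℓ % 2 = m % 2) {v w : ZMod m × ZMod n} :
    (HTG m n ℓ).Adj v w ↔ ∃ p : ℤ × ℤ, Odd (p.1 + p.2) ∧ ∃ s ∈ oddSteps,
      s(v, w) = s(proj m n ℓ p, proj m n ℓ (p + s)) := by
  have vertical (v : ZMod m × ZMod n) : ∃ p : ℤ × ℤ, Odd (p.1 + p.2) ∧ ∃ s ∈ oddSteps,
      s(v, v + (0, 1)) = s(proj m n ℓ p, proj m n ℓ (p + s)) := by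
    obtain ⟨p, rfl⟩ := proj_surjective (ℓ := ℓ) v
    rcases Int.even_or_odd (p.1 + p.2) with hp | hp
    · refine ⟨p + (0, 1), by simpa [← add_assoc] using hp.add_one, (0, -1), by decide, ?_⟩
      rw [Sym2.eq_swap, ← proj_add_zero_one, add_assoc p,
        show ((0, 1) + (0, -1) : ℤ × ℤ) = 0 from rfl, add_zero]
    · exact ⟨p, hp, (0, 1), by decide, by rw [proj_add_zero_one]⟩
  have cross (v : ZMod m × ZMod n) (hv : IsOddVertex v) : ∃ p : ℤ × ℤ, Odd (p.1 + p.2) ∧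
      ∃ s ∈ oddSteps, s(v, nextColumn ℓ v) = s(proj m n ℓ p, proj m n ℓ (p + s)) := by
    obtain ⟨p, rfl⟩ := proj_surjective (ℓ := ℓ) v
    exact ⟨p, (isOddVertex_proj_iff hn hpar p).mp hv, (1, 0), by decide,
      by rw [proj_add_one_zero]⟩
  constructor
  · rw [adj_iff hpar]
    rintro ⟨-, rfl | rfl | ⟨hv, rfl⟩ | ⟨hw, rfl⟩⟩
    · exact vertical v
    · simpa only [Sym2.eq_swap] using vertical w
    · exact cross v hv
    · simpa only [Sym2.eq_swap] using cross w hw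
  · rintro ⟨p, hp, s, hs, he⟩
    rw [← SimpleGraph.mem_edgeSet, he, SimpleGraph.mem_edgeSet]
    exact adj_proj_add_of_mem_oddSteps hn hpar hp hs

theorem isOddVertex_iff_not_of_adj (hn : Even n) (hpar : ℓ % 2 = m % 2) {v w : ZMod m × ZMod n}
    (h : (HTG m n ℓ).Adj v w) : IsOddVertex v ↔ ¬ IsOddVertex w := by
  obtain ⟨p, hp, s, hs, he⟩ := (adj_iff_exists_oddSteps hn hpar).mp h
  have hps : ¬ Odd ((p + s).1 + (p + s).2) :=
    Int.not_odd_iff_even.mpr (even_add_of_mem_oddSteps hp hs)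
  rw [← isOddVertex_proj_iff hn hpar] at hp hps
  rcases Sym2.eq_iff.mp he with ⟨rfl, rfl⟩ | ⟨rfl, rfl⟩ <;> tauto

theorem isBipartite (hn : Even n) (hpar : ℓ % 2 = m % 2) : (HTG m n ℓ).IsBipartite := by
  let coloring : (HTG m n ℓ).Coloring Prop := SimpleGraph.Coloring.mk IsOddVertex
    fun h heq => by simpa [heq] using isOddVertex_iff_not_of_adj hn hpar h
  simpa using coloring.colorable

theorem adj_proj_iff_of_odd (hn : Even n) (hpar : ℓ % 2 = m % 2) {p : ℤ × ℤ}
    (hp : Odd (p.1 + p.2)) {w : ZMod m × ZMod n} :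
    (HTG m n ℓ).Adj (proj m n ℓ p) w ↔ ∃ s ∈ oddSteps, w = proj m n ℓ (p + s) := by
  constructor
  · intro h
    have hp' := (isOddVertex_proj_iff hn hpar p).mpr hp
    have hw := (isOddVertex_iff_not_of_adj hn hpar h).mp hp'
    obtain ⟨q, hq, s, hs, he⟩ := (adj_iff_exists_oddSteps hn hpar).mp h
    rcases Sym2.eq_iff.mp he with ⟨hpq, rfl⟩ | ⟨-, rfl⟩
    · refine ⟨s, hs, ?_⟩
      rw [proj_eq_proj_iff] at hpq ⊢
      simpa using neg_mem hpq
    · exact absurd ((isOddVertex_proj_iff hn hpar q).mpr hq) hw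
  · rintro ⟨s, hs, rfl⟩
    exact adj_proj_add_of_mem_oddSteps hn hpar hp hs

theorem adj_proj_iff_of_even (hn : Even n) (hpar : ℓ % 2 = m % 2) {p : ℤ × ℤ}
    (hp : Even (p.1 + p.2)) {w : ZMod m × ZMod n} :
    (HTG m n ℓ).Adj (proj m n ℓ p) w ↔ ∃ s ∈ oddSteps, w = proj m n ℓ (p - s) := by
  constructor
  · intro h
    obtain ⟨q, rfl⟩ := proj_surjective (ℓ := ℓ) w
    have hp' : ¬ IsOddVertex (proj m n ℓ p) := by
      rwa [isOddVertex_proj_iff hn hpar, Int.not_odd_iff_even]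
    have hq := (isOddVertex_iff_not_of_adj hn hpar h.symm).mpr hp'
    rw [isOddVertex_proj_iff hn hpar] at hq
    obtain ⟨s, hs, hpq⟩ := (adj_proj_iff_of_odd hn hpar hq).mp h.symm
    refine ⟨s, hs, ?_⟩
    rw [proj_eq_proj_iff] at hpq ⊢
    convert neg_mem hpq using 1
    abel
  · rintro ⟨s, hs, rfl⟩
    have h := adj_proj_add_of_mem_oddSteps (m := m) hn hpar (odd_sub_of_mem_oddSteps hp hs) hs
    rw [sub_add_cancel] at h
    exact h.symm

end Parity

section Squares

/-- There is a closed walk of length 4 from an odd vertex in the quotient of the plane honeycomb by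
`L` none of whose four turns goes straight back. Its successive steps are `s₁`, `-s₂`, `s₃`,
`-s₄`; non-backtracking needs to be required only at the second and third vertices, as it then
follows at the other two. -/
def HasStepSquare (L : AddSubgroup (ℤ × ℤ)) : Prop :=
  ∃ s₁ ∈ oddSteps, ∃ s₂ ∈ oddSteps, ∃ s₃ ∈ oddSteps, ∃ s₄ ∈ oddSteps,
    s₁ - s₂ ∉ L ∧ s₂ - s₃ ∉ L ∧ s₁ - s₂ + s₃ - s₄ ∈ L

section Quotient

variable [NeZero m] [NeZero n]

theorem hasStepSquare_of_isOddVertex (hn : Even n) (hpar : ℓ % 2 = m % 2)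
    {a b c d : ZMod m × ZMod n} (ha : IsOddVertex a) (hab : (HTG m n ℓ).Adj a b)
    (hbc : (HTG m n ℓ).Adj b c) (hcd : (HTG m n ℓ).Adj c d) (hda : (HTG m n ℓ).Adj d a)
    (hac : a ≠ c) (hbd : b ≠ d) : HasStepSquare (periodLattice m n ℓ) := by
  obtain ⟨p, rfl⟩ := proj_surjective (ℓ := ℓ) a
  have hp := (isOddVertex_proj_iff hn hpar p).mp ha
  obtain ⟨s₁, hs₁, rfl⟩ := (adj_proj_iff_of_odd hn hpar hp).mp hab
  have hp₁ := even_add_of_mem_oddSteps hp hs₁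
  obtain ⟨s₂, hs₂, rfl⟩ := (adj_proj_iff_of_even hn hpar hp₁).mp hbc
  have hp₂ := odd_sub_of_mem_oddSteps hp₁ hs₂
  obtain ⟨s₃, hs₃, rfl⟩ := (adj_proj_iff_of_odd hn hpar hp₂).mp hcd
  have hp₃ := even_add_of_mem_oddSteps hp₂ hs₃
  obtain ⟨s₄, hs₄, hclosed⟩ := (adj_proj_iff_of_even hn hpar hp₃).mp hda
  refine ⟨s₁, hs₁, s₂, hs₂, s₃, hs₃, s₄, hs₄, ?_, ?_, ?_⟩
  · rwa [ne_comm, ne_eq, proj_eq_proj_iff,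
      show p + s₁ - s₂ - p = s₁ - s₂ by abel] at hac
  · rwa [ne_eq, proj_eq_proj_iff,
      show p + s₁ - (p + s₁ - s₂ + s₃) = s₂ - s₃ by abel] at hbd
  · rwa [eq_comm, proj_eq_proj_iff,
      show p + s₁ - s₂ + s₃ - s₄ - p = s₁ - s₂ + s₃ - s₄ by abel] at hclosed

theorem hasSquare_of_hasStepSquare (hn : Even n) (hpar : ℓ % 2 = m % 2)
    (h : HasStepSquare (periodLattice m n ℓ)) : HasSquare (HTG m n ℓ) := by
  obtain ⟨s₁, hs₁, s₂, hs₂, s₃, hs₃, s₄, hs₄, hac, hbd, hclosed⟩ := h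
  let p : ℤ × ℤ := (1, 0)
  have hp : Odd (p.1 + p.2) := by decide
  have hp₁ := even_add_of_mem_oddSteps hp hs₁
  have hp₂ := odd_sub_of_mem_oddSteps hp₁ hs₂
  have hp₃ := even_add_of_mem_oddSteps hp₂ hs₃
  refine ⟨proj m n ℓ p, proj m n ℓ (p + s₁), proj m n ℓ (p + s₁ - s₂),
    proj m n ℓ (p + s₁ - s₂ + s₃), (adj_proj_iff_of_odd hn hpar hp).mpr ⟨s₁, hs₁, rfl⟩,
    (adj_proj_iff_of_even hn hpar hp₁).mpr ⟨s₂, hs₂, rfl⟩,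
    (adj_proj_iff_of_odd hn hpar hp₂).mpr ⟨s₃, hs₃, rfl⟩,
    (adj_proj_iff_of_even hn hpar hp₃).mpr ⟨s₄, hs₄, ?_⟩, ?_, ?_⟩
  · rwa [eq_comm, proj_eq_proj_iff,
      show p + s₁ - s₂ + s₃ - s₄ - p = s₁ - s₂ + s₃ - s₄ by abel]
  · rwa [ne_comm, ne_eq, proj_eq_proj_iff, show p + s₁ - s₂ - p = s₁ - s₂ by abel]
  · rwa [ne_eq, proj_eq_proj_iff, show p + s₁ - (p + s₁ - s₂ + s₃) = s₂ - s₃ by abel]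

theorem hasSquare_iff_hasStepSquare (hn : Even n) (hpar : ℓ % 2 = m % 2) :
    HasSquare (HTG m n ℓ) ↔ HasStepSquare (periodLattice m n ℓ) := by
  refine ⟨?_, hasSquare_of_hasStepSquare hn hpar⟩
  rintro ⟨a, b, c, d, hab, hbc, hcd, hda, hac, hbd⟩
  by_cases ha : IsOddVertex a
  · exact hasStepSquare_of_isOddVertex hn hpar ha hab hbc hcd hda hac hbd
  · have hb := (isOddVertex_iff_not_of_adj hn hpar hab.symm).mpr ha
    exact hasStepSquare_of_isOddVertex hn hpar hb hbc hcd hda hab hbd hac.symm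

end Quotient

variable {L : AddSubgroup (ℤ × ℤ)}

theorem exists_sign_smul_alternating_sum :
    ∀ s₁ ∈ oddSteps, ∀ s₂ ∈ oddSteps, ∀ s₃ ∈ oddSteps, ∀ s₄ ∈ oddSteps,
      s₁ ≠ s₂ → s₂ ≠ s₃ → s₃ ≠ s₄ → s₄ ≠ s₁ → ∃ ε ∈ ({1, -1} : Finset ℤ),
        ε • (s₁ - s₂ + s₃ - s₄) ∈ ({(0, 4), (1, 3), (1, -3), (2, 0)} : Finset (ℤ × ℤ)) ∨
        ∃ e ∈ ({(1, 1), (1, -1)} : Finset (ℤ × ℤ)),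
          ε • (s₁ - s₂) = e ∧ ε • (s₁ - s₂ + s₃ - s₄) = 2 • e := by
  decide

theorem exists_mem_of_hasStepSquare (h : HasStepSquare L) :
    (∃ d ∈ ({(0, 4), (1, 3), (1, -3), (2, 0)} : Finset (ℤ × ℤ)), d ∈ L) ∨
      ∃ e ∈ ({(1, 1), (1, -1)} : Finset (ℤ × ℤ)), 2 • e ∈ L ∧ e ∉ L := by
  obtain ⟨s₁, hs₁, s₂, hs₂, s₃, hs₃, s₄, hs₄, h₁₂, h₂₃, hclosed⟩ := h
  have hne₁₂ : s₁ ≠ s₂ := fun h => h₁₂ (by simp [h, zero_mem])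
  have hne₂₃ : s₂ ≠ s₃ := fun h => h₂₃ (by simp [h, zero_mem])
  have hne₃₄ : s₃ ≠ s₄ := fun h => h₁₂ (by simpa [h] using hclosed)
  have hne₄₁ : s₄ ≠ s₁ := by
    rintro rfl
    rw [show s₄ - s₂ + s₃ - s₄ = -(s₂ - s₃) by abel, neg_mem_iff] at hclosed
    exact h₂₃ hclosed
  obtain ⟨ε, hε, hd | ⟨e, he, h₁₂e, hdouble⟩⟩ :=
    exists_sign_smul_alternating_sum s₁ hs₁ s₂ hs₂ s₃ hs₃ s₄ hs₄ hne₁₂ hne₂₃ hne₃₄ hne₄₁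
  · exact .inl ⟨_, hd, zsmul_mem hclosed ε⟩
  · refine .inr ⟨e, he, hdouble ▸ zsmul_mem hclosed ε, ?_⟩
    rw [← h₁₂e]
    fin_cases hε
    · simpa using h₁₂
    · rwa [neg_one_smul, neg_mem_iff]

theorem hasStepSquare_of_double_mem {e : ℤ × ℤ} (he : e ∈ ({(1, 1), (1, -1)} : Finset (ℤ × ℤ)))
    (hdouble : 2 • e ∈ L) (hnot : e ∉ L) : HasStepSquare L := by
  have hstep : (1, 0) - e ∈ oddSteps := by fin_cases he <;> decide
  refine ⟨(1, 0), by decide, (1, 0) - e, hstep, (1, 0), by decide, (1, 0) - e, hstep, ?_, ?_, ?_⟩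
  · simpa using hnot
  · simpa using hnot
  · rwa [show (1, 0) - ((1, 0) - e) + (1, 0) - ((1, 0) - e) = 2 • e by abel]

theorem hasStepSquare_of_mem (htwo : (0, 2) ∉ L) {d : ℤ × ℤ}
    (hd : d ∈ ({(0, 4), (1, 3), (1, -3), (2, 0)} : Finset (ℤ × ℤ))) (hmem : d ∈ L) :
    HasStepSquare L := by
  have hneg_two : (0, -2) ∉ L := fun h => htwo (by simpa using neg_mem h)
  simp only [Finset.mem_insert, Finset.mem_singleton] at hd
  rcases hd with rfl | rfl | rfl | rfl
  · exact ⟨(0, 1), by decide, (0, -1), by decide, (0, 1), by decide, (0, -1), by decide,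
      by simpa using htwo, by simpa using hneg_two, by simpa using hmem⟩
  · refine ⟨(0, 1), by decide, (0, -1), by decide, (1, 0), by decide, (0, -1), by decide,
      by simpa using htwo, fun h => htwo ?_, by simpa using hmem⟩
    simpa using add_mem hmem h
  · refine ⟨(0, -1), by decide, (0, 1), by decide, (1, 0), by decide, (0, 1), by decide,
      by simpa using hneg_two, fun h => hneg_two ?_, by simpa using hmem⟩
    simpa using add_mem hmem h
  · have hdiag : (1, -1) ∉ L := fun h => htwo <| by simpa using sub_mem hmem (add_mem h h)
    refine ⟨(1, 0), by decide, (0, 1), by decide, (1, 0), by decide, (0, -1), by decide,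
      by simpa using hdiag, fun h => hdiag ?_, by simpa using hmem⟩
    simpa using neg_mem h

theorem hasStepSquare_iff_mem (htwo : (0, 2) ∉ L) :
    HasStepSquare L ↔ (0, 4) ∈ L ∨ (1, 3) ∈ L ∨ (1, -3) ∈ L ∨ (2, 0) ∈ L ∨
      ((2, 2) ∈ L ∧ (1, 1) ∉ L) ∨ ((2, -2) ∈ L ∧ (1, -1) ∉ L) := by
  trans (∃ d ∈ ({(0, 4), (1, 3), (1, -3), (2, 0)} : Finset (ℤ × ℤ)), d ∈ L) ∨
      ∃ e ∈ ({(1, 1), (1, -1)} : Finset (ℤ × ℤ)), 2 • e ∈ L ∧ e ∉ L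
  · refine ⟨exists_mem_of_hasStepSquare, ?_⟩
    rintro (⟨d, hd, hmem⟩ | ⟨e, he, hdouble, hnot⟩)
    · exact hasStepSquare_of_mem htwo hd hmem
    · exact hasStepSquare_of_double_mem he hdouble hnot
  · simp only [Finset.mem_insert, Finset.mem_singleton, exists_eq_or_imp, exists_eq_left, or_assoc]
    rfl

end Squares

end HTG

theorem dvd_iff_eq_zero_or_eq {a b : ℤ} (hlt : -a < b) (hlt' : b < 2 * a) :
    a ∣ b ↔ b = 0 ∨ b = a := by
  constructor
  · rintro ⟨k, rfl⟩
    have : 0 < a := by linarith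
    have : -1 < k := by nlinarith
    have : k < 2 := by nlinarith
    obtain rfl | rfl : k = 0 ∨ k = 1 := by omega
    all_goals simp
  · rintro (rfl | rfl) <;> simp

/-- **Proposition 5.3 (Alspach).** `HTG(m,n,ℓ)` has girth `4` iff one of (i)–(v) holds. -/
theorem statement15 (m n ℓ : ℕ) (hm : 0 < m) (hn : 4 ≤ n) (hne : Even n)
    (hl : ℓ ≤ n / 2) (hpar : ℓ % 2 = m % 2) :
    (HTG m n ℓ).girth = 4 ↔
      (n = 4) ∨
      (m = 1 ∧ 6 ≤ n ∧ ℓ = 3) ∨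
      (m = 1 ∧ 6 ≤ n ∧ n % 4 = 2 ∧ 2 * ℓ = n) ∨
      (m = 1 ∧ 8 ≤ n ∧ n % 4 = 0 ∧ 2 * ℓ = n - 2) ∨
      (m = 2 ∧ 6 ≤ n ∧ (ℓ = 0 ∨ ℓ = 2)) := by
  have : NeZero m := ⟨hm.ne'⟩
  have : NeZero n := ⟨by omega⟩
  have htwo : (0, 2) ∉ periodLattice m n ℓ := by
    rw [zero_mk_mem_periodLattice_iff hm, dvd_iff_eq_zero_or_eq] <;> omega
  rw [girth_eq_four_iff_hasSquare (HTG.isBipartite hne hpar),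
    HTG.hasSquare_iff_hasStepSquare hne hpar, HTG.hasStepSquare_iff_mem htwo]
  simp only [zero_mk_mem_periodLattice_iff hm, one_mk_mem_periodLattice_iff,
    two_mk_mem_periodLattice_iff]
  have htwice : 2 * (ℓ : ℤ) ≤ n := by omega
  have hfour : (4 : ℤ) ≤ n := by omega
  simp (disch := omega) only [dvd_iff_eq_zero_or_eq]
  obtain ⟨k, rfl⟩ := hne
  obtain rfl | rfl | hm_other : m = 1 ∨ m = 2 ∨ m ≠ 1 ∧ m ≠ 2 := by omega
  · simp only [true_and, OfNat.one_ne_ofNat, false_and, or_false]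
    constructor <;> intro <;> omega
  · simp only [true_and, OfNat.ofNat_ne_one, false_and, false_or, not_false_eq_true, and_true]
    omega
  · simp only [hm_other, false_and, or_false, not_false_eq_true, and_true]
    omega

end HTGPaper
end
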